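/- arXiv:2604.14075 — 4 statements merged into one kernel-verified Lean document; each statement's English description precedes it below -/
import Mathlib

section
/- Under the nested conditional composition setting with smooth integrands and with ℱ_0 equal to the trivial σ-algebra, the nested objective F : ℝ^{d_T} → ℝ, F(x) = E[f_1(ξ_1, F_2^T(x))], is differentiable at every x ∈ ℝ^{d_T}, and its gradient satisfies ∇F(x) = G_1(x), where the matrices G_t(x) ∈ ℝ^{d_T × d_{t-1}} are defined by the backward recursion G_T(x) = E[∇_x f_T(ξ_T, x) | ℱ_{T-1}] and G_t(x) = E[G_{t+1}(x) · ∇_{x_t} f_t(ξ_t, F_{t+1}^T(x)) | ℱ_{t-1}] for t = T−1,...,1 (so that G_1(x) is deterministic). Here ∇ f denotes the transposed Jacobian. -/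
/-!
The nested objective is differentiated by propagating a first-order expansion with a *uniform
quadratic remainder* through the recursion.  A random map `Z : E → Ω → F` has such an expansion
`QuadApprox μ Z G x` at `x` when, for every `y`, almost surely
`‖Z y - Z x - G (y - x)‖ ≤ C ‖y - x‖²`, together with `‖Z y - Z x‖ ≤ C ‖y - x‖` and `‖G‖ ≤ C`,
for one deterministic constant `C`.  The exceptional null set may depend on `y`, which is why no
almost sure differentiability of `y ↦ Z y ω` is claimed (conditional expectations are only defined
up to null sets, separately for each `y`).

The property is stable under the two operations of the recursion.

* `QuadApprox.comp`: composing with a random map that is Lipschitz and has a Lipschitz derivative,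
  by the mean value inequality.
* `QuadApprox.condExp`: conditional expectation, since it is linear, commutes with evaluation of
  a random linear map at a fixed vector, and preserves deterministic bounds on the norm.

Integrating the expansion at the last stage gives `HasFDerivAt`.  Measurability of the random
Jacobians comes from writing directional derivatives as limits of difference quotients.
-/


open MeasureTheory

/-- The backward recursion defining the conditional risk mappings `F_s^T(x)` for a
deterministic `x ∈ ℝ^{d_T}`: `condRiskRec … T (fun _ => x) k` is `F_{T+1-k}^T(x)`, via the
recursion `F_{T+1}^T(x) = x` and `F_s^T(x) = E[f_s(ξ_s, F_{s+1}^T(x)) | ℱ_{s-1}]`. -/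
noncomputable def condRiskRec {Ω : Type*} [MeasurableSpace Ω] (μ : Measure Ω)
    (ℱ : ℕ → MeasurableSpace Ω) (d mdim : ℕ → ℕ)
    (ξ : (s : ℕ) → Ω → EuclideanSpace ℝ (Fin (mdim s)))
    (f : (s : ℕ) → EuclideanSpace ℝ (Fin (mdim s)) → EuclideanSpace ℝ (Fin (d s)) →
      EuclideanSpace ℝ (Fin (d (s - 1))))
    (t : ℕ) (z : Ω → EuclideanSpace ℝ (Fin (d t))) :
    (k : ℕ) → Ω → EuclideanSpace ℝ (Fin (d (t - k)))
  | 0 => z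
  | k + 1 =>
      μ[fun ω => f (t - k) (ξ (t - k) ω) (condRiskRec μ ℱ d mdim ξ f t z k ω) |
        ℱ (t - (k + 1))]

/-- The backward recursion defining the (transposed) gradient processes `G_t(x)`, encoded
as continuous linear maps (Jacobians) `ℝ^{d_T} →L ℝ^{d_{t-1}}`: `gradRec … T x k` is
`G_{T+1-k}(x)ᵀ`. The initialization `k = 0` is the identity (the virtual stage `T+1`), so
`k = 1` gives `G_T(x) = E[∇_x f_T(ξ_T, x) | ℱ_{T-1}]` and the step
`G_t(x) = E[G_{t+1}(x) · ∇_{x_t} f_t(ξ_t, F_{t+1}^T(x)) | ℱ_{t-1}]` becomes composition of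
Jacobians. -/
noncomputable def gradRec {Ω : Type*} [MeasurableSpace Ω] (μ : Measure Ω)
    (ℱ : ℕ → MeasurableSpace Ω) (d mdim : ℕ → ℕ)
    (ξ : (s : ℕ) → Ω → EuclideanSpace ℝ (Fin (mdim s)))
    (f : (s : ℕ) → EuclideanSpace ℝ (Fin (mdim s)) → EuclideanSpace ℝ (Fin (d s)) →
      EuclideanSpace ℝ (Fin (d (s - 1))))
    (T : ℕ) (x : EuclideanSpace ℝ (Fin (d T))) :
    (k : ℕ) → Ω → (EuclideanSpace ℝ (Fin (d T)) →L[ℝ] EuclideanSpace ℝ (Fin (d (T - k))))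
  | 0 => fun _ => ContinuousLinearMap.id ℝ (EuclideanSpace ℝ (Fin (d T)))
  | k + 1 =>
      μ[fun ω =>
          (fderiv ℝ (f (T - k) (ξ (T - k) ω))
              (condRiskRec μ ℱ d mdim ξ f T (fun _ => x) k ω)).comp
            (gradRec μ ℱ d mdim ξ f T x k ω) |
        ℱ (T - (k + 1))]

open Filter Topology

/-- A random function `Z : E → Ω → F` has at `x` a first-order expansion with random derivative
`G`, almost surely Lipschitz and with quadratic remainder, all controlled by one deterministic
constant `C`.  The null set on which the expansion may fail is allowed to depend on `y`. -/
structure QuadApprox {Ω E F : Type*} [MeasurableSpace Ω] (μ : Measure Ω)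
    [NormedAddCommGroup E] [NormedSpace ℝ E] [NormedAddCommGroup F] [NormedSpace ℝ F]
    (Z : E → Ω → F) (G : Ω → E →L[ℝ] F) (x : E) : Prop where
  meas : ∀ y, StronglyMeasurable (Z y)
  int : ∀ y, Integrable (Z y) μ
  measG : StronglyMeasurable G
  bound : ∃ C : ℝ, 0 ≤ C ∧ (∀ᵐ ω ∂μ, ‖G ω‖ ≤ C) ∧
    (∀ y, ∀ᵐ ω ∂μ, ‖Z y ω - Z x ω‖ ≤ C * ‖y - x‖) ∧
    (∀ y, ∀ᵐ ω ∂μ, ‖Z y ω - Z x ω - G ω (y - x)‖ ≤ C * ‖y - x‖ ^ 2)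

theorem QuadApprox.integrable_deriv {Ω E F : Type*} [MeasurableSpace Ω] {μ : Measure Ω}
    [IsProbabilityMeasure μ]
    [NormedAddCommGroup E] [NormedSpace ℝ E] [NormedAddCommGroup F] [NormedSpace ℝ F]
    {Z : E → Ω → F} {G : Ω → E →L[ℝ] F} {x : E} (h : QuadApprox μ Z G x) :
    Integrable G μ := by
  obtain ⟨C, -, hG, -⟩ := h.bound
  exact Integrable.of_bound h.measG.aestronglyMeasurable C hG

/-- The mean value inequality for a map with `S`-Lipschitz derivative: the remainder is quadratic
(with constant `S` rather than the optimal `S / 2`). -/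
theorem norm_taylor_one_le {E F : Type*}
    [NormedAddCommGroup E] [NormedSpace ℝ E] [NormedAddCommGroup F] [NormedSpace ℝ F]
    {g : E → F} {S : ℝ} (hS : 0 ≤ S) (hg : Differentiable ℝ g)
    (hsm : ∀ x y, ‖fderiv ℝ g x - fderiv ℝ g y‖ ≤ S * ‖x - y‖) (a b : E) :
    ‖g b - g a - fderiv ℝ g a (b - a)‖ ≤ S * ‖b - a‖ ^ 2 := by
  have h := (convex_segment (𝕜 := ℝ) a b).norm_image_sub_le_of_norm_fderiv_le'
    (f := g) (φ := fderiv ℝ g a) (C := S * ‖b - a‖) (fun z _ => hg z) (fun z hz => by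
      refine (hsm z a).trans (mul_le_mul_of_nonneg_left ?_ hS)
      obtain ⟨t, ⟨ht0, ht1⟩, rfl⟩ := (segment_eq_image' ℝ a b ▸ hz)
      simp only [add_sub_cancel_left, norm_smul, Real.norm_eq_abs, abs_of_nonneg ht0]
      exact mul_le_of_le_one_left (norm_nonneg _) ht1)
    (left_mem_segment ℝ a b) (right_mem_segment ℝ a b)
  calc _ ≤ S * ‖b - a‖ * ‖b - a‖ := h
    _ = _ := by ring

theorem norm_fderiv_le_of_lip {E F : Type*}
    [NormedAddCommGroup E] [NormedSpace ℝ E] [NormedAddCommGroup F] [NormedSpace ℝ F]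
    {g : E → F} {L : ℝ} (hL : 0 ≤ L) (hlip : ∀ x y, ‖g x - g y‖ ≤ L * ‖x - y‖) (x : E) :
    ‖fderiv ℝ g x‖ ≤ L :=
  norm_fderiv_le_of_lip' ℝ hL (Eventually.of_forall fun y => hlip y x)

/-- In finite dimensions, a random linear map is strongly measurable as soon as its value at each
fixed vector is. -/
theorem stronglyMeasurable_clm_of_apply {Ω : Type*} [MeasurableSpace Ω] {n : ℕ} {F : Type*}
    [NormedAddCommGroup F] [NormedSpace ℝ F]
    {A : Ω → EuclideanSpace ℝ (Fin n) →L[ℝ] F}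
    (hA : ∀ v, StronglyMeasurable fun ω => A ω v) : StronglyMeasurable A := by
  have key : A = fun ω => ∑ i : Fin n,
      ContinuousLinearMap.smulRightL ℝ (EuclideanSpace ℝ (Fin n)) F
        (EuclideanSpace.proj i) (A ω (EuclideanSpace.single i 1)) := by
    funext ω
    ext v
    conv_lhs => rw [← (EuclideanSpace.basisFun (Fin n) ℝ).sum_repr v]
    simp
  rw [key]
  exact Finset.stronglyMeasurable_fun_sum _ fun i _ =>
    (ContinuousLinearMap.continuous _).comp_stronglyMeasurable (hA _)

/-- The Jacobian of a random differentiable function at a random point is strongly measurable: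
its directional derivatives are pointwise limits of difference quotients. -/
theorem stronglyMeasurable_fderiv_random {Ω : Type*} [MeasurableSpace Ω] {n : ℕ} {H : Type*}
    [NormedAddCommGroup H] [NormedSpace ℝ H]
    {φ : Ω → EuclideanSpace ℝ (Fin n) → H} (hdiff : ∀ ω, Differentiable ℝ (φ ω))
    (hmeas : ∀ W : Ω → EuclideanSpace ℝ (Fin n), StronglyMeasurable W →
      StronglyMeasurable fun ω => φ ω (W ω))
    {W : Ω → EuclideanSpace ℝ (Fin n)} (hW : StronglyMeasurable W) :
    StronglyMeasurable fun ω => fderiv ℝ (φ ω) (W ω) := by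
  refine stronglyMeasurable_clm_of_apply fun v => ?_
  refine stronglyMeasurable_of_tendsto (u := atTop)
    (f := fun (k : ℕ) ω => (k : ℝ) • (φ ω (W ω + (k : ℝ)⁻¹ • v) - φ ω (W ω))) (fun k => ?_) ?_
  · exact ((hmeas _ (hW.add stronglyMeasurable_const)).sub (hmeas _ hW)).const_smul _
  · refine tendsto_pi_nhds.2 fun ω => ?_
    exact ((hdiff ω (W ω)).hasFDerivAt.lim_real v).comp tendsto_natCast_atTop_atTop

/-- Composition with a random map, Lipschitz and with Lipschitz derivative uniformly in `ω`,
preserves quadratic expansions and composes the derivatives (chain rule). -/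
theorem QuadApprox.comp {Ω E H : Type*} {n : ℕ} [MeasurableSpace Ω] {μ : Measure Ω}
    [IsProbabilityMeasure μ]
    [NormedAddCommGroup E] [NormedSpace ℝ E] [NormedAddCommGroup H] [NormedSpace ℝ H]
    {Z : E → Ω → EuclideanSpace ℝ (Fin n)} {G : Ω → E →L[ℝ] EuclideanSpace ℝ (Fin n)} {x : E}
    (h : QuadApprox μ Z G x) {φ : Ω → EuclideanSpace ℝ (Fin n) → H} {L S : ℝ}
    (hL : 0 ≤ L) (hS : 0 ≤ S)
    (hdiff : ∀ ω, Differentiable ℝ (φ ω))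
    (hmeas : ∀ W : Ω → EuclideanSpace ℝ (Fin n), StronglyMeasurable W →
      StronglyMeasurable fun ω => φ ω (W ω))
    (h0 : Integrable (fun ω => φ ω 0) μ)
    (hlip : ∀ ω a b, ‖φ ω a - φ ω b‖ ≤ L * ‖a - b‖)
    (hsm : ∀ ω a b, ‖fderiv ℝ (φ ω) a - fderiv ℝ (φ ω) b‖ ≤ S * ‖a - b‖) :
    QuadApprox μ (fun y ω => φ ω (Z y ω))
      (fun ω => (fderiv ℝ (φ ω) (Z x ω)).comp (G ω)) x := by
  obtain ⟨C, hC, hG, hZ, hT⟩ := h.bound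
  have hD : ∀ ω a, ‖fderiv ℝ (φ ω) a‖ ≤ L := fun ω a => norm_fderiv_le_of_lip hL (hlip ω) a
  refine ⟨fun y => hmeas _ (h.meas y), fun y => ?_, ?_, ?_⟩
  · -- `‖φ (Z y)‖ ≤ ‖φ 0‖ + L ‖Z y‖`
    refine (h0.norm.add ((h.int y).norm.const_mul L)).mono'
      (hmeas _ (h.meas y)).aestronglyMeasurable (Eventually.of_forall fun ω => ?_)
    have h1 := hlip ω (Z y ω) 0
    have h2 := norm_le_norm_add_norm_sub' (φ ω (Z y ω)) (φ ω 0)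
    simp only [sub_zero] at h1
    simpa using h2.trans (by gcongr)
  · exact (isBoundedBilinearMap_comp (𝕜 := ℝ)).continuous.comp_stronglyMeasurable
      ((stronglyMeasurable_fderiv_random hdiff hmeas (h.meas x)).prodMk h.measG)
  · have hLC : 0 ≤ L * C := mul_nonneg hL hC
    have hSC : 0 ≤ S * C ^ 2 := mul_nonneg hS (sq_nonneg C)
    refine ⟨L * C + S * C ^ 2, add_nonneg hLC hSC, ?_, fun y => ?_, fun y => ?_⟩
    · filter_upwards [hG] with ω hω
      calc _ ≤ ‖fderiv ℝ (φ ω) (Z x ω)‖ * ‖G ω‖ := ContinuousLinearMap.opNorm_comp_le _ _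
        _ ≤ L * C := mul_le_mul (hD _ _) hω (norm_nonneg _) hL
        _ ≤ _ := le_add_of_nonneg_right hSC
    · filter_upwards [hZ y] with ω hω
      calc _ ≤ L * ‖Z y ω - Z x ω‖ := hlip _ _ _
        _ ≤ L * (C * ‖y - x‖) := by gcongr
        _ = L * C * ‖y - x‖ := by ring
        _ ≤ _ := by gcongr; exact le_add_of_nonneg_right hSC
    · filter_upwards [hZ y, hT y] with ω hω hrem
      -- Taylor remainder of `φ` at `Z x`, plus the Jacobian of `φ` applied to the remainder of `Z`
      have hsplit : φ ω (Z y ω) - φ ω (Z x ω)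
            - (fderiv ℝ (φ ω) (Z x ω)).comp (G ω) (y - x)
          = (φ ω (Z y ω) - φ ω (Z x ω) - fderiv ℝ (φ ω) (Z x ω) (Z y ω - Z x ω))
            + fderiv ℝ (φ ω) (Z x ω) (Z y ω - Z x ω - G ω (y - x)) := by
        simp only [ContinuousLinearMap.comp_apply, map_sub]
        abel
      rw [hsplit]
      calc _ ≤ S * ‖Z y ω - Z x ω‖ ^ 2 + L * ‖Z y ω - Z x ω - G ω (y - x)‖ :=
            norm_add_le_of_le (norm_taylor_one_le hS (hdiff ω) (hsm ω) _ _)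
              (ContinuousLinearMap.le_of_opNorm_le _ (hD _ _) _)
        _ ≤ S * (C * ‖y - x‖) ^ 2 + L * (C * ‖y - x‖ ^ 2) := by gcongr
        _ = _ := by ring

/-- Conditional expectation preserves quadratic expansions, with the conditional expectation of
the derivative as new derivative. -/
theorem QuadApprox.condExp {Ω E F : Type*} {m m0 : MeasurableSpace Ω} {μ : Measure Ω}
    [IsProbabilityMeasure μ]
    [NormedAddCommGroup E] [NormedSpace ℝ E]
    [NormedAddCommGroup F] [NormedSpace ℝ F] [CompleteSpace F]
    {Z : E → Ω → F} {G : Ω → E →L[ℝ] F} {x : E} (h : QuadApprox μ Z G x) (hm : m ≤ m0) :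
    QuadApprox μ (fun y => μ[Z y | m]) (μ[G | m]) x := by
  obtain ⟨C, hC, hG, hZ, hT⟩ := h.bound
  have hGi := h.integrable_deriv
  refine ⟨fun y => stronglyMeasurable_condExp.mono hm, fun y => integrable_condExp,
    stronglyMeasurable_condExp.mono hm, C, hC, ae_bdd_norm_condExp_of_ae_bdd_norm hG,
    fun y => ?_, fun y => ?_⟩
  · filter_upwards [ae_bdd_norm_condExp_of_ae_bdd_norm (m := m) (f := Z y - Z x) (hZ y),
      condExp_sub (h.int y) (h.int x) m] with ω h1 h2
    rwa [h2] at h1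
  · have hGv : Integrable (fun ω => G ω (y - x)) μ := hGi.apply_continuousLinearMap _
    have hcomm := (ContinuousLinearMap.apply ℝ F (y - x)).comp_condExp_comm (m := m) hGi
    filter_upwards [ae_bdd_norm_condExp_of_ae_bdd_norm (m := m)
        (f := Z y - Z x - fun ω => G ω (y - x)) (hT y),
      condExp_sub ((h.int y).sub (h.int x)) hGv m,
      condExp_sub (h.int y) (h.int x) m, hcomm] with ω h1 h2 h3 h4
    rw [h2, Pi.sub_apply, h3] at h1
    have h5 : (μ[fun ω => G ω (y - x) | m]) ω = (μ[G | m]) ω (y - x) := h4.symm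
    rwa [h5] at h1

theorem QuadApprox.hasFDerivAt_integral {Ω E F : Type*} [MeasurableSpace Ω] {μ : Measure Ω}
    [IsProbabilityMeasure μ]
    [NormedAddCommGroup E] [NormedSpace ℝ E]
    [NormedAddCommGroup F] [NormedSpace ℝ F] [CompleteSpace F]
    {Z : E → Ω → F} {G : Ω → E →L[ℝ] F} {x : E} (h : QuadApprox μ Z G x) :
    HasFDerivAt (fun y => ∫ ω, Z y ω ∂μ) (∫ ω, G ω ∂μ) x := by
  obtain ⟨C, hC, -, -, hT⟩ := h.bound
  have hGi := h.integrable_deriv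
  refine HasFDerivAt.of_isLittleO ?_
  have hO : (fun y => (∫ ω, Z y ω ∂μ) - (∫ ω, Z x ω ∂μ) - (∫ ω, G ω ∂μ) (y - x))
      =O[𝓝 x] fun y => ‖y - x‖ ^ 2 := by
    refine Asymptotics.IsBigO.of_bound C (Eventually.of_forall fun y => ?_)
    have hsub : Integrable (fun ω => Z y ω - Z x ω) μ := (h.int y).sub (h.int x)
    rw [ContinuousLinearMap.integral_apply hGi, ← integral_sub (h.int y) (h.int x),
      ← integral_sub hsub (hGi.apply_continuousLinearMap _)]
    simpa using norm_integral_le_of_norm_le_const (hT y)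
  refine hO.trans_isLittleO ?_
  exact Asymptotics.isLittleO_pow_sub_sub x one_lt_two

/-- The stages of the recursion have quadratic expansions.  The bound `k ≤ T` ensures that, in
the step from `k` to `k + 1`, the truncated subtraction `T - k` is a genuine stage between `1` and
`T`. -/
theorem quadApprox_condRiskRec {Ω : Type*} [inst : MeasurableSpace Ω] (μ : Measure Ω)
    [IsProbabilityMeasure μ]
    (T : ℕ) (ℱ : ℕ → MeasurableSpace Ω)
    (hle : ∀ s, ℱ s ≤ inst)
    (d mdim : ℕ → ℕ)
    (ξ : (s : ℕ) → Ω → EuclideanSpace ℝ (Fin (mdim s)))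
    (f : (s : ℕ) → EuclideanSpace ℝ (Fin (mdim s)) → EuclideanSpace ℝ (Fin (d s)) →
      EuclideanSpace ℝ (Fin (d (s - 1))))
    (L S : ℕ → ℝ) (hL : ∀ s, 0 ≤ L s) (hS : ∀ s, 0 ≤ S s)
    (hξ : ∀ s, 1 ≤ s → s ≤ T → Measurable[ℱ s] (ξ s))
    (hfmeas : ∀ s, 1 ≤ s → s ≤ T → Measurable (Function.uncurry (f s)))
    (hf0 : ∀ s, 1 ≤ s → s ≤ T → Integrable (fun ω => f s (ξ s ω) 0) μ)
    (hflip : ∀ s, 1 ≤ s → s ≤ T →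
      ∀ (u : EuclideanSpace ℝ (Fin (mdim s))) (x y : EuclideanSpace ℝ (Fin (d s))),
        ‖f s u x - f s u y‖ ≤ L s * ‖x - y‖)
    (hfdiff : ∀ s, 1 ≤ s → s ≤ T →
      ∀ u : EuclideanSpace ℝ (Fin (mdim s)), Differentiable ℝ (f s u))
    (hfsmooth : ∀ s, 1 ≤ s → s ≤ T →
      ∀ (u : EuclideanSpace ℝ (Fin (mdim s))) (x y : EuclideanSpace ℝ (Fin (d s))),
        ‖fderiv ℝ (f s u) x - fderiv ℝ (f s u) y‖ ≤ S s * ‖x - y‖)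
    (x : EuclideanSpace ℝ (Fin (d T))) (k : ℕ) (hk : k ≤ T) :
    QuadApprox μ (fun y => condRiskRec μ ℱ d mdim ξ f T (fun _ => y) k)
      (gradRec μ ℱ d mdim ξ f T x k) x := by
  induction k with
  | zero =>
    refine ⟨fun y => stronglyMeasurable_const, fun y => integrable_const y,
      stronglyMeasurable_const, 1, zero_le_one,
      Eventually.of_forall fun ω => ContinuousLinearMap.norm_id_le,
      fun y => Eventually.of_forall fun ω => ?_, fun y => Eventually.of_forall fun ω => ?_⟩
    · simp [condRiskRec]
    · simp [condRiskRec, gradRec]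
  | succ k ih =>
    have h1 : 1 ≤ T - k := by omega
    have h2 : T - k ≤ T := Nat.sub_le _ _
    have hξ' : Measurable (ξ (T - k)) := (hξ _ h1 h2).mono (hle _) le_rfl
    exact QuadApprox.condExp (QuadApprox.comp (ih (by omega))
      (φ := fun ω => f (T - k) (ξ (T - k) ω)) (hL (T - k)) (hS (T - k))
      (fun ω => hfdiff _ h1 h2 _)
      (fun W hW => ((hfmeas _ h1 h2).comp
        (hξ'.prodMk hW.measurable)).stronglyMeasurable)
      (hf0 _ h1 h2) (fun ω => hflip _ h1 h2 _) (fun ω => hfsmooth _ h1 h2 _)) (hle _)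

/-- **Gradient of the nested objective (chain rule through nested conditional
expectations).** Under the nested conditional composition setting with smooth integrands
and trivial `ℱ_0`, the nested objective `F(x) = E[f_1(ξ_1, F_2^T(x))]`
(`= ∫ condRiskRec … T (fun _ => x) T`, valued in `ℝ^{d_0}` with `d_0 = 1`) is differentiable
at every `x`, with derivative (i.e. transposed gradient) `G_1(x) = ∫ gradRec … T x T`,
where `G` satisfies the backward recursion `G_T(x) = E[∇_x f_T(ξ_T, x) | ℱ_{T-1}]` and
`G_t(x) = E[G_{t+1}(x) ∇_{x_t} f_t(ξ_t, F_{t+1}^T(x)) | ℱ_{t-1}]`, so that `G_1(x)` is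
deterministic. -/
theorem nested_objective_hasFDerivAt
    {Ω : Type*} [inst : MeasurableSpace Ω] (μ : Measure Ω) [IsProbabilityMeasure μ]
    (T : ℕ) (hT : 1 ≤ T) (ℱ : ℕ → MeasurableSpace Ω)
    (hmono : Monotone ℱ) (hle : ∀ s, ℱ s ≤ inst) (hℱ0 : ℱ 0 = ⊥)
    (d mdim : ℕ → ℕ) (hd0 : d 0 = 1)
    (ξ : (s : ℕ) → Ω → EuclideanSpace ℝ (Fin (mdim s)))
    (f : (s : ℕ) → EuclideanSpace ℝ (Fin (mdim s)) → EuclideanSpace ℝ (Fin (d s)) →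
      EuclideanSpace ℝ (Fin (d (s - 1))))
    (L S : ℕ → ℝ) (hL : ∀ s, 0 ≤ L s) (hS : ∀ s, 0 ≤ S s)
    (hξ : ∀ s, 1 ≤ s → s ≤ T → Measurable[ℱ s] (ξ s))
    (hfmeas : ∀ s, 1 ≤ s → s ≤ T → Measurable (Function.uncurry (f s)))
    (hf0 : ∀ s, 1 ≤ s → s ≤ T → Integrable (fun ω => f s (ξ s ω) 0) μ)
    (hflip : ∀ s, 1 ≤ s → s ≤ T →
      ∀ (u : EuclideanSpace ℝ (Fin (mdim s))) (x y : EuclideanSpace ℝ (Fin (d s))),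
        ‖f s u x - f s u y‖ ≤ L s * ‖x - y‖)
    (hfdiff : ∀ s, 1 ≤ s → s ≤ T →
      ∀ u : EuclideanSpace ℝ (Fin (mdim s)), Differentiable ℝ (f s u))
    (hfsmooth : ∀ s, 1 ≤ s → s ≤ T →
      ∀ (u : EuclideanSpace ℝ (Fin (mdim s))) (x y : EuclideanSpace ℝ (Fin (d s))),
        ‖fderiv ℝ (f s u) x - fderiv ℝ (f s u) y‖ ≤ S s * ‖x - y‖) :
    ∀ x : EuclideanSpace ℝ (Fin (d T)),
      HasFDerivAt
        (fun y => ∫ ω, condRiskRec μ ℱ d mdim ξ f T (fun _ => y) T ω ∂μ)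
        (∫ ω, gradRec μ ℱ d mdim ξ f T x T ω ∂μ) x := by
  intro x
  exact (quadApprox_condRiskRec μ T ℱ hle d mdim ξ f L S hL hS hξ hfmeas hf0 hflip hfdiff
    hfsmooth x T le_rfl).hasFDerivAt_integral
end

section
/- Fix M ∈ ℕ. For r ∈ (0,1) let q_r(ℓ) = r(1−r)^ℓ / (1 − (1−r)^{M+1}) for ℓ = 0, 1, ..., M denote the probability mass function of the geometric distribution with rate r truncated at M. Then the product Φ(r) = ( Σ_{ℓ=0}^{M} 1/(2^ℓ q_r(ℓ)) ) · ( Σ_{ℓ=0}^{M} 2^ℓ q_r(ℓ) ) satisfies Φ(r) ≥ Φ(1/2) = (M+1)² for all r ∈ (0,1); that is, r = 1/2 minimizes Φ over (0,1). -/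
/-!
Writing `a ℓ = 2 ^ ℓ * q_r(ℓ) > 0`, the bound is `(∑ 1 / a ℓ) * (∑ a ℓ)`, which is at least
`(M + 1) ^ 2` by the Cauchy–Schwarz inequality, with equality when `a` is constant. For `r = 1/2`
the factor `(1 - r) ^ ℓ` cancels `2 ^ ℓ`, so `a` is indeed constant.
-/

open Finset

/-- Probability mass function of the geometric distribution with rate `r` truncated at `M`:
`q_r(ℓ) = r (1−r)^ℓ / (1 − (1−r)^{M+1})` for `ℓ = 0, …, M`. -/
noncomputable def truncGeomPMF (M : ℕ) (r : ℝ) (ℓ : ℕ) : ℝ :=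
  r * (1 - r) ^ ℓ / (1 - (1 - r) ^ (M + 1))

/-- The work-normalized second-moment bound
`Φ(r) = (Σ_{ℓ=0}^M 1/(2^ℓ q_r(ℓ))) · (Σ_{ℓ=0}^M 2^ℓ q_r(ℓ))`. -/
noncomputable def workNormalizedBound (M : ℕ) (r : ℝ) : ℝ :=
  (∑ ℓ ∈ range (M + 1), 1 / (2 ^ ℓ * truncGeomPMF M r ℓ)) *
    ∑ ℓ ∈ range (M + 1), 2 ^ ℓ * truncGeomPMF M r ℓ

theorem truncGeomPMF_pos (M : ℕ) {r : ℝ} (hr : r ∈ Set.Ioo (0 : ℝ) 1) (ℓ : ℕ) :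
    0 < truncGeomPMF M r ℓ := by
  obtain ⟨h0, h1⟩ := hr
  have hs : 0 < 1 - r := by linarith
  have hlt : (1 - r) ^ (M + 1) < 1 := pow_lt_one₀ hs.le (by linarith) M.succ_ne_zero
  have hden : 0 < 1 - (1 - r) ^ (M + 1) := by linarith
  unfold truncGeomPMF
  positivity

/-- At rate `1/2` the expected cost `2 ^ ℓ * q(ℓ)` is the same at every level. -/
theorem two_pow_mul_truncGeomPMF_half (M ℓ : ℕ) :
    2 ^ ℓ * truncGeomPMF M (1 / 2) ℓ = truncGeomPMF M (1 / 2) 0 := by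
  have h : (2 : ℝ) ^ ℓ * (1 - 1 / 2) ^ ℓ = 1 := by
    rw [← mul_pow]; norm_num
  unfold truncGeomPMF
  rw [← mul_div_assoc, mul_left_comm, h, pow_zero]

/-- **Optimality of rate `r = 1/2` for the truncated geometric level distribution.**
For every `M ∈ ℕ`, the product `Φ(r)` satisfies `Φ(1/2) = (M+1)²` and
`Φ(r) ≥ Φ(1/2)` for all `r ∈ (0,1)`. -/
theorem truncGeom_half_minimizes_work (M : ℕ) :
    workNormalizedBound M (1 / 2) = ((M : ℝ) + 1) ^ 2 ∧
      ∀ r ∈ Set.Ioo (0 : ℝ) 1, workNormalizedBound M (1 / 2) ≤ workNormalizedBound M r := by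
  have half : workNormalizedBound M (1 / 2) = ((M : ℝ) + 1) ^ 2 := by
    have hc := (truncGeomPMF_pos M (r := 1 / 2) (by norm_num) 0).ne'
    simp only [workNormalizedBound, two_pow_mul_truncGeomPMF_half, sum_const, card_range,
      nsmul_eq_mul]
    push_cast
    field_simp
  refine ⟨half, fun r hr => ?_⟩
  have ha : ∀ ℓ, 0 < 2 ^ ℓ * truncGeomPMF M r ℓ := fun ℓ =>
    mul_pos (by positivity) (truncGeomPMF_pos M hr ℓ)
  have cs := sum_sq_le_sum_mul_sum_of_sq_le_mul (range (M + 1)) (r := fun _ => (1 : ℝ))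
    (f := fun ℓ => 1 / (2 ^ ℓ * truncGeomPMF M r ℓ)) (g := fun ℓ => 2 ^ ℓ * truncGeomPMF M r ℓ)
    (fun ℓ _ => (one_div_pos.2 (ha ℓ)).le) (fun ℓ _ => (ha ℓ).le)
    (fun ℓ _ => by rw [one_div_mul_cancel (ha ℓ).ne', one_pow])
  rw [half]
  simpa [workNormalizedBound] using cs
end

section
/- Let (Ω,ℱ,P) be a probability space, M ∈ ℕ, and let Y_0, ..., Y_M and A_1, B_1, ..., A_M, B_M be integrable real random variables with E[A_ℓ] = E[B_ℓ] = E[Y_{ℓ-1}] for every ℓ ∈ {1,...,M}; set A_0 = B_0 = 0. Let λ be a random variable valued in {0,1,...,M}, independent of the σ-algebra generated by all the Y_ℓ, A_ℓ, B_ℓ, with q(ℓ) = P(λ = ℓ) > 0 for every ℓ. Then the inverse-propensity-weighted antithetic telescoping estimator is unbiased for the top level: E[ (Y_λ − (1/2) A_λ − (1/2) B_λ) / q(λ) ] = E[Y_M]. -/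
/-!
Conditioning on the level `λ`, which is independent of the summands, turns the
inverse-propensity-weighted expectation of `D_λ / q(λ)` into the plain sum
`∑_{ℓ ≤ M} E[D_ℓ]` (`integral_inverse_propensity`). For `D_ℓ = Y_ℓ - A_ℓ/2 - B_ℓ/2` the mean
identities give `E[D_0] = E[Y_0]` and `E[D_ℓ] = E[Y_ℓ] - E[Y_{ℓ-1}]` for `1 ≤ ℓ ≤ M`, so this
sum telescopes to `E[Y_M]`.
-/

open MeasureTheory ProbabilityTheory

/-- Inverse-propensity weighting: sampling one term at a random level independent of each term,
and dividing by the probability of that level, is unbiased for the full sum of means. -/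
theorem integral_inverse_propensity {Ω : Type*} [MeasurableSpace Ω]
    (μ : Measure Ω) [IsProbabilityMeasure μ] (M : ℕ) (D : ℕ → Ω → ℝ)
    (hD : ∀ ℓ ≤ M, Integrable (D ℓ) μ)
    (lam : Ω → ℕ) (hlam : Measurable lam) (hlamM : ∀ ω, lam ω ≤ M)
    (hindep : ∀ ℓ ≤ M, IndepFun lam (D ℓ) μ)
    (q : ℕ → ℝ) (hq : ∀ ℓ ≤ M, (μ {ω | lam ω = ℓ}).toReal = q ℓ)
    (hqpos : ∀ ℓ ≤ M, 0 < q ℓ) :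
    ∫ ω, D (lam ω) ω / q (lam ω) ∂μ = ∑ ℓ ∈ Finset.range (M + 1), ∫ ω, D ℓ ω ∂μ := by
  have hset : ∀ ℓ, MeasurableSet {ω | lam ω = ℓ} := fun ℓ => hlam (measurableSet_singleton ℓ)
  have hsplit : ∀ ω, D (lam ω) ω / q (lam ω) =
      ∑ ℓ ∈ Finset.range (M + 1), {ω | lam ω = ℓ}.indicator (fun ω => D ℓ ω / q ℓ) ω := by
    intro ω
    rw [Finset.sum_eq_single_of_mem (lam ω) (Finset.mem_range.2 (Nat.lt_succ_of_le (hlamM ω)))]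
    · simp
    · intro ℓ _ hne
      simp [Set.indicator, hne.symm]
  simp_rw [hsplit]
  rw [integral_finsetSum]
  · refine Finset.sum_congr rfl fun ℓ hℓ => ?_
    have hℓM : ℓ ≤ M := Nat.le_of_lt_succ (Finset.mem_range.1 hℓ)
    have hφ : Measurable (fun n : ℕ => ({ℓ} : Set ℕ).indicator (fun _ => (1 : ℝ)) n) :=
      measurable_from_top
    have hi := (hindep ℓ hℓM).comp hφ measurable_id
    have hmul := hi.integral_fun_mul_eq_mul_integral
      (hφ.comp hlam).aestronglyMeasurable (hD ℓ hℓM).aestronglyMeasurable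
    have hone : ∫ ω, ((fun n : ℕ => ({ℓ} : Set ℕ).indicator (fun _ => (1 : ℝ)) n) ∘ lam) ω ∂μ
        = q ℓ := by
      rw [← hq ℓ hℓM, ← Measure.real, ← integral_indicator_one (hset ℓ)]
      rfl
    have hfac : ∀ ω, {ω | lam ω = ℓ}.indicator (fun ω => D ℓ ω / q ℓ) ω =
        (((fun n : ℕ => ({ℓ} : Set ℕ).indicator (fun _ => (1 : ℝ)) n) ∘ lam) ω *
          (id ∘ D ℓ) ω) / q ℓ := by
      intro ω
      by_cases h : lam ω = ℓ <;> simp [Set.indicator, h]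
    simp_rw [hfac]
    rw [integral_div, hmul, hone, mul_div_cancel_left₀ _ (hqpos ℓ hℓM).ne']
    rfl
  · intro ℓ hℓ
    exact ((hD ℓ (Nat.le_of_lt_succ (Finset.mem_range.1 hℓ))).div_const _).indicator (hset ℓ)

/-- **Unbiasedness of the truncated randomized (antithetic) multilevel telescoping
estimator.** Let `Y_0, …, Y_M` and `A_ℓ, B_ℓ` be integrable real random variables with
`E[A_ℓ] = E[B_ℓ] = E[Y_{ℓ−1}]` for `1 ≤ ℓ ≤ M` and `A_0 = B_0 = 0`. Let `λ` be a random
level in `{0,…,M}`, independent of the σ-algebra generated by all `Y_ℓ, A_ℓ, B_ℓ`, with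
`q(ℓ) = P(λ = ℓ) > 0`. Then
`E[(Y_λ − (1/2)A_λ − (1/2)B_λ)/q(λ)] = E[Y_M]`. -/
theorem truncated_randomized_mlmc_unbiased {Ω : Type*} [MeasurableSpace Ω]
    (μ : Measure Ω) [IsProbabilityMeasure μ] (M : ℕ)
    (Y A B : ℕ → Ω → ℝ)
    (hmeas : ∀ ℓ ≤ M, Measurable (Y ℓ) ∧ Measurable (A ℓ) ∧ Measurable (B ℓ))
    (hint : ∀ ℓ ≤ M, Integrable (Y ℓ) μ ∧ Integrable (A ℓ) μ ∧ Integrable (B ℓ) μ)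
    (hA0 : ∀ ω, A 0 ω = 0) (hB0 : ∀ ω, B 0 ω = 0)
    (hAB : ∀ ℓ, 1 ≤ ℓ → ℓ ≤ M →
      (∫ ω, A ℓ ω ∂μ) = (∫ ω, Y (ℓ - 1) ω ∂μ) ∧
      (∫ ω, B ℓ ω ∂μ) = ∫ ω, Y (ℓ - 1) ω ∂μ)
    (lam : Ω → ℕ) (hlam : Measurable lam) (hlamM : ∀ ω, lam ω ≤ M)
    (hindep : IndepFun lam
      (fun ω (ℓ : Fin (M + 1)) => (Y ℓ.1 ω, A ℓ.1 ω, B ℓ.1 ω)) μ)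
    (q : ℕ → ℝ)
    (hq : ∀ ℓ ≤ M, (μ {ω | lam ω = ℓ}).toReal = q ℓ)
    (hqpos : ∀ ℓ ≤ M, 0 < q ℓ) :
    ∫ ω, (Y (lam ω) ω - (1 / 2) * A (lam ω) ω - (1 / 2) * B (lam ω) ω) / q (lam ω) ∂μ =
      ∫ ω, Y M ω ∂μ := by
  have hint' : ∀ ℓ ≤ M,
      Integrable (fun ω => Y ℓ ω - (1 / 2) * A ℓ ω - (1 / 2) * B ℓ ω) μ := fun ℓ hℓ =>
    ((hint ℓ hℓ).1.sub ((hint ℓ hℓ).2.1.const_mul _)).sub ((hint ℓ hℓ).2.2.const_mul _)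
  have hindep' : ∀ ℓ ≤ M,
      IndepFun lam (fun ω => Y ℓ ω - (1 / 2) * A ℓ ω - (1 / 2) * B ℓ ω) μ := by
    intro ℓ hℓ
    have hψ : Measurable (fun z : Fin (M + 1) → ℝ × ℝ × ℝ =>
        (z ⟨ℓ, Nat.lt_succ_of_le hℓ⟩).1 - (1 / 2) * (z ⟨ℓ, Nat.lt_succ_of_le hℓ⟩).2.1
          - (1 / 2) * (z ⟨ℓ, Nat.lt_succ_of_le hℓ⟩).2.2) := by
      fun_prop
    exact hindep.comp measurable_id hψ
  have hmean : ∀ ℓ ≤ M, ∫ ω, (Y ℓ ω - (1 / 2) * A ℓ ω - (1 / 2) * B ℓ ω) ∂μ =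
      ∫ ω, Y ℓ ω ∂μ - (1 / 2) * ∫ ω, A ℓ ω ∂μ - (1 / 2) * ∫ ω, B ℓ ω ∂μ := by
    intro ℓ hℓ
    obtain ⟨hY, hA, hB⟩ := hint ℓ hℓ
    have hYA : Integrable (fun ω => Y ℓ ω - (1 / 2) * A ℓ ω) μ := hY.sub (hA.const_mul _)
    rw [integral_sub hYA (hB.const_mul _),
      integral_sub hY (hA.const_mul _), integral_const_mul, integral_const_mul]
  have htel : ∀ m ≤ M, ∑ ℓ ∈ Finset.range (m + 1),
      ∫ ω, (Y ℓ ω - (1 / 2) * A ℓ ω - (1 / 2) * B ℓ ω) ∂μ = ∫ ω, Y m ω ∂μ := by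
    intro m
    induction m with
    | zero => intro _; simp [hA0, hB0]
    | succ k ih =>
      intro hk
      obtain ⟨hA, hB⟩ := hAB (k + 1) (Nat.succ_pos k) hk
      rw [Finset.sum_range_succ, ih (Nat.le_of_succ_le hk), hmean _ hk, hA, hB,
        Nat.add_sub_cancel]
      ring
  rw [← htel M le_rfl]
  exact integral_inverse_propensity μ M
    (fun ℓ ω => Y ℓ ω - (1 / 2) * A ℓ ω - (1 / 2) * B ℓ ω) hint' lam hlam hlamM hindep' q hq hqpos
end

section
/- Let (Ω,ℱ,P) be a probability space and (Y_ℓ)_{ℓ≥0} a sequence of integrable real random variables with Y_{-1} := 0 and Σ_{ℓ=0}^∞ E[|Y_ℓ − Y_{ℓ-1}|] < ∞ (so that E[Y_ℓ] converges to a limit F* as ℓ → ∞). Let λ be an ℕ-valued random variable independent of the σ-algebra generated by (Y_ℓ)_{ℓ≥0}, with q(ℓ) = P(λ = ℓ) > 0 for every ℓ ∈ ℕ. Then the random variable (Y_λ − Y_{λ-1})/q(λ) is integrable and E[ (Y_λ − Y_{λ-1})/q(λ) ] = F* = lim_{ℓ→∞} E[Y_ℓ]. -/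
open MeasureTheory ProbabilityTheory

/-!
Write `D ℓ = Y ℓ - Y (ℓ - 1)` for the increments (with `D 0 = Y 0`) and split `Ω` into the level
sets `{λ = ℓ}`. On `{λ = ℓ}` the estimator equals `D ℓ / q ℓ`, and since `D ℓ` is independent of
that event, the restricted integrals of the estimator and of its absolute value are
`q ℓ * E[D ℓ] / q ℓ = E[D ℓ]` and `E|D ℓ|`. Summability of `E|D ℓ|` therefore gives integrability
over the countable union of the level sets, and countable additivity of the integral represents the
expectation as `∑ E[D ℓ]`, whose partial sums telescope to `E[Y ℓ]`.
-/

/-- Inverse-propensity weighting: integrating `g / μ(X = a)` over `{X = a}` recovers `E[g]` when `g`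
is a measurable function of a variable `Z` independent of `X`. -/
lemma setIntegral_div_of_indepFun {Ω α β : Type*} [MeasurableSpace Ω] [MeasurableSpace α]
    [MeasurableSingletonClass α] [MeasurableSpace β] {μ : Measure Ω}
    {X : Ω → α} {Z : Ω → β} (hX : Measurable X) (hZ : Measurable Z) (h : IndepFun X Z μ)
    {g : β → ℝ} (hg : Measurable g) (a : α) {p : ℝ} (hp : (μ {ω | X ω = a}).toReal = p)
    (hp0 : p ≠ 0) :
    ∫ ω in {ω | X ω = a}, g (Z ω) / p ∂μ = ∫ ω, g (Z ω) ∂μ := by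
  have key := Indep.setIntegral_eq_mul hX.comap_le ((IndepFun_iff_Indep X Z μ).1 h)
    hZ.aemeasurable (A := {ω | X ω = a}) ⟨{a}, measurableSet_singleton a, rfl⟩
    hg.aestronglyMeasurable
  rw [integral_div, key, measureReal_def, hp, mul_div_cancel_left₀ _ hp0]

/-- **Unbiasedness of the untruncated randomized multilevel Monte Carlo estimator.**
Let `(Y_ℓ)_{ℓ≥0}` be integrable real random variables with `Y_{-1} := 0` and
`Σ_ℓ E[|Y_ℓ − Y_{ℓ-1}|] < ∞`, and let `λ` be an `ℕ`-valued random level, independent of the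
σ-algebra generated by `(Y_ℓ)`, with `q(ℓ) = P(λ = ℓ) > 0` for every `ℓ`. Then
`(Y_λ − Y_{λ-1})/q(λ)` is integrable and its expectation equals
`F* = lim_{ℓ→∞} E[Y_ℓ]`. -/
theorem randomized_mlmc_unbiased {Ω : Type*} [MeasurableSpace Ω]
    (μ : Measure Ω) [IsProbabilityMeasure μ]
    (Y : ℕ → Ω → ℝ)
    (hmeas : ∀ ℓ, Measurable (Y ℓ))
    (hint : ∀ ℓ, Integrable (Y ℓ) μ)
    (hsum : Summable fun ℓ =>
      ∫ ω, |Y ℓ ω - (if ℓ = 0 then 0 else Y (ℓ - 1) ω)| ∂μ)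
    (lam : Ω → ℕ) (hlam : Measurable lam)
    (hindep : IndepFun lam (fun ω (ℓ : ℕ) => Y ℓ ω) μ)
    (q : ℕ → ℝ)
    (hq : ∀ ℓ, (μ {ω | lam ω = ℓ}).toReal = q ℓ)
    (hqpos : ∀ ℓ, 0 < q ℓ) :
    Integrable
      (fun ω => (Y (lam ω) ω - (if lam ω = 0 then 0 else Y (lam ω - 1) ω)) / q (lam ω)) μ ∧
    Filter.Tendsto (fun ℓ => ∫ ω, Y ℓ ω ∂μ) Filter.atTop
      (nhds (∫ ω,
        (Y (lam ω) ω - (if lam ω = 0 then 0 else Y (lam ω - 1) ω)) / q (lam ω) ∂μ)) := by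
  set f : Ω → ℝ :=
    fun ω => (Y (lam ω) ω - (if lam ω = 0 then 0 else Y (lam ω - 1) ω)) / q (lam ω) with hf
  let d : ℕ → (ℕ → ℝ) → ℝ := fun ℓ y => y ℓ - (if ℓ = 0 then 0 else y (ℓ - 1))
  have hZ : Measurable (fun ω (ℓ : ℕ) => Y ℓ ω) := measurable_pi_lambda _ hmeas
  have hd : ∀ ℓ, Measurable (d ℓ) := by
    intro ℓ
    rcases ℓ with _ | ℓ <;> simp only [d] <;> simp <;> fun_prop
  have hdint : ∀ ℓ, Integrable (fun ω => d ℓ (fun k => Y k ω)) μ := by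
    intro ℓ
    rcases ℓ with _ | ℓ
    · simpa [d] using hint 0
    · exact (hint (ℓ + 1)).sub (hint ℓ)
  let A : ℕ → Set Ω := fun ℓ => {ω | lam ω = ℓ}
  have hA : ∀ ℓ, MeasurableSet (A ℓ) := fun ℓ => hlam (measurableSet_singleton ℓ)
  have hAU : ⋃ ℓ, A ℓ = Set.univ := by
    ext ω
    simp [A]
  have hAd : Pairwise (Function.onFun Disjoint A) := by
    intro i j hij
    exact Set.disjoint_left.2 fun ω (hi : lam ω = i) (hj : lam ω = j) => hij (hi.symm.trans hj)
  have hfA : ∀ ℓ, Set.EqOn f (fun ω => d ℓ (fun k => Y k ω) / q ℓ) (A ℓ) := by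
    rintro _ ω rfl
    rfl
  have hfi : ∀ ℓ, IntegrableOn f (A ℓ) μ := fun ℓ =>
    (((hdint ℓ).div_const (q ℓ)).integrableOn).congr_fun (hfA ℓ).symm (hA ℓ)
  have hint_eq : ∀ ℓ, ∫ ω in A ℓ, f ω ∂μ = ∫ ω, d ℓ (fun k => Y k ω) ∂μ := by
    intro ℓ
    rw [setIntegral_congr_fun (hA ℓ) (hfA ℓ)]
    exact setIntegral_div_of_indepFun hlam hZ hindep (hd ℓ) ℓ (hq ℓ) (hqpos ℓ).ne'
  have hnorm_eq : ∀ ℓ, ∫ ω in A ℓ, ‖f ω‖ ∂μ = ∫ ω, |d ℓ (fun k => Y k ω)| ∂μ := by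
    intro ℓ
    have h : Set.EqOn (fun ω => ‖f ω‖) (fun ω => |d ℓ (fun k => Y k ω)| / q ℓ) (A ℓ) := by
      intro ω hω
      simp only [hfA ℓ hω, Real.norm_eq_abs, abs_div, abs_of_pos (hqpos ℓ)]
    rw [setIntegral_congr_fun (hA ℓ) h]
    exact setIntegral_div_of_indepFun (g := fun y => |d ℓ y|) hlam hZ hindep
      (continuous_abs.measurable.comp (hd ℓ)) ℓ (hq ℓ) (hqpos ℓ).ne'
  have hfU : IntegrableOn f (⋃ ℓ, A ℓ) μ :=
    integrableOn_iUnion_of_summable_integral_norm hfi (by simp only [hnorm_eq]; exact hsum)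
  have hsumf := hasSum_integral_iUnion hA hAd hfU
  rw [hAU] at hfU hsumf
  rw [setIntegral_univ] at hsumf
  simp only [hint_eq] at hsumf
  refine ⟨integrableOn_univ.1 hfU, ?_⟩
  have htel : ∀ n, ∑ ℓ ∈ Finset.range (n + 1), ∫ ω, d ℓ (fun k => Y k ω) ∂μ = ∫ ω, Y n ω ∂μ := by
    intro n
    induction n with
    | zero => simp [d]
    | succ n ih =>
      rw [Finset.sum_range_succ, ih]
      simp [d, integral_sub (hint (n + 1)) (hint n)]
  simpa only [Function.comp_def, htel] using
    hsumf.tendsto_sum_nat.comp (Filter.tendsto_add_atTop_nat 1)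
end
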